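/- arXiv:1907.05210 — 3 statements merged into one kernel-verified Lean document; each statement's English description precedes it below -/
import Mathlib

section
/- (Property 1) Let T, W, V, γ, b be positive real constants and define f_N(x) = √(T W x / V)·(ln(1+γ) − (b ln 2)/(T W x)) for x > 0. Let D ⊆ (0, ∞) be a convex set on which f_N(x) ≥ 0 for all x ∈ D. Then the composition x ↦ f_Q(f_N(x)) is convex on D, where f_Q is the Gaussian Q-function. -/
open MeasureTheory

/-- The Gaussian Q-function `f_Q(x) = (1/√(2π)) ∫_x^∞ e^{−t²/2} dt`. -/
noncomputable def gaussianQ (x : ℝ) : ℝ :=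
  (Real.sqrt (2 * Real.pi))⁻¹ * ∫ t in Set.Ioi x, Real.exp (-t ^ 2 / 2)

/-!
On `x > 0` the argument `f_N(x)` has the form `A √x - B / √x` with `A, B ≥ 0`. It is concave,
because `√x` is concave and `1 / √x`, a decreasing convex function of a concave one, is convex.
Since `gaussianQ` is decreasing and, on `[0, ∞)`, convex, its composition with a nonnegative
concave function is convex.
-/

section Convexity

variable {𝕜 E α β : Type*} [Semiring 𝕜] [PartialOrder 𝕜] [AddCommMonoid E] [SMul 𝕜 E]
  [AddCommMonoid α] [PartialOrder α] [SMul 𝕜 α] [AddCommMonoid β] [PartialOrder β] [SMul 𝕜 β]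

theorem convexOn_comp_concaveOn_of_mapsTo {s : Set E} {t : Set β} {f : E → β} {g : β → α}
    (hg : ConvexOn 𝕜 t g) (hg_anti : AntitoneOn g t) (hf : ConcaveOn 𝕜 s f)
    (hst : Set.MapsTo f s t) : ConvexOn 𝕜 s fun x => g (f x) := by
  refine ⟨hf.1, fun x hx y hy p q hp hq hpq => ?_⟩
  calc g (f (p • x + q • y))
      ≤ g (p • f x + q • f y) :=
        hg_anti (hg.1 (hst hx) (hst hy) hp hq hpq) (hst (hf.1 hx hy hp hq hpq))
          (hf.2 hx hy hp hq hpq)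
    _ ≤ p • g (f x) + q • g (f y) := hg.2 (hst hx) (hst hy) hp hq hpq

end Convexity

theorem convexOn_inv_Ioi : ConvexOn ℝ (Set.Ioi 0) fun x : ℝ => x⁻¹ := by
  simpa only [zpow_neg_one] using convexOn_zpow (𝕜 := ℝ) (-1)

theorem concaveOn_sqrt_Ioi : ConcaveOn ℝ (Set.Ioi 0) Real.sqrt :=
  Real.strictConcaveOn_sqrt.concaveOn.subset Set.Ioi_subset_Ici_self (convex_Ioi 0)

theorem convexOn_inv_sqrt : ConvexOn ℝ (Set.Ioi 0) fun x : ℝ => (√x)⁻¹ :=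
  convexOn_comp_concaveOn_of_mapsTo convexOn_inv_Ioi inv_antitoneOn_Ioi concaveOn_sqrt_Ioi
    fun _ => Real.sqrt_pos.2

theorem concaveOn_sqrt_mul_sub_div {a b : ℝ} (ha : 0 ≤ a) (hb : 0 ≤ b) :
    ConcaveOn ℝ (Set.Ioi 0) fun x => √x * (a - b / x) := by
  refine ((concaveOn_sqrt_Ioi.smul ha).sub (convexOn_inv_sqrt.smul hb)).congr fun x _ => ?_
  calc a * √x - b * (√x)⁻¹ = a * √x - b * (√x / x) := by rw [Real.sqrt_div_self]
    _ = √x * (a - b / x) := by ring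

theorem concaveOn_sqrt_mul_div_mul_sub_div {k v a b : ℝ} (hk : 0 ≤ k) (hv : 0 ≤ v)
    (ha : 0 ≤ a) (hb : 0 ≤ b) :
    ConcaveOn ℝ (Set.Ioi 0) fun x => √(k * x / v) * (a - b / (k * x)) := by
  refine ((concaveOn_sqrt_mul_sub_div ha (div_nonneg hb hk)).smul
    (Real.sqrt_nonneg (k / v))).congr fun x _ => ?_
  calc √(k / v) * (√x * (a - b / k / x))
      = √(k / v * x) * (a - b / (k * x)) := by
        rw [Real.sqrt_mul (div_nonneg hk hv), div_div, mul_assoc]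
    _ = √(k * x / v) * (a - b / (k * x)) := by rw [div_mul_eq_mul_div]

theorem hasDerivAt_integral_Ioi {E : Type*} [NormedAddCommGroup E] [NormedSpace ℝ E]
    [CompleteSpace E] {f : ℝ → E} {a x : ℝ} (hf : IntegrableOn f (Set.Ioi a)) (hax : a < x)
    (hfx : ContinuousAt f x) : HasDerivAt (fun y => ∫ t in Set.Ioi y, f t) (-f x) x := by
  have hprimitive : HasDerivAt (fun y => ∫ t in a..y, f t) (f x) x :=
    intervalIntegral.integral_hasDerivAt_right
      ((intervalIntegrable_iff_integrableOn_Ioc_of_le hax.le).2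
        (hf.mono_set Set.Ioc_subset_Ioi_self))
      ⟨Set.Ioi a, Ioi_mem_nhds hax, hf.aestronglyMeasurable⟩ hfx
  refine (hprimitive.const_sub (∫ t in Set.Ioi a, f t)).congr_of_eventuallyEq ?_
  filter_upwards [Ioi_mem_nhds hax] with y hay
  rw [← intervalIntegral.integral_Ioi_sub_Ioi hf (le_of_lt hay), sub_sub_cancel]

theorem integrable_exp_neg_sq_div_two : Integrable fun t : ℝ => Real.exp (-t ^ 2 / 2) := by
  refine (integrable_exp_neg_mul_sq (one_half_pos (α := ℝ))).congr (.of_forall fun t => ?_)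
  ring_nf

theorem hasDerivAt_gaussianQ (x : ℝ) :
    HasDerivAt gaussianQ (-((√(2 * Real.pi))⁻¹ * Real.exp (-x ^ 2 / 2))) x := by
  have htail : HasDerivAt (fun y => ∫ t in Set.Ioi y, Real.exp (-t ^ 2 / 2))
      (-Real.exp (-x ^ 2 / 2)) x :=
    hasDerivAt_integral_Ioi integrable_exp_neg_sq_div_two.integrableOn (sub_one_lt x)
      (by fun_prop)
  exact (htail.const_mul (√(2 * Real.pi))⁻¹).congr_deriv (mul_neg _ _)

theorem antitone_gaussianQ : Antitone gaussianQ := by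
  refine antitone_of_deriv_nonpos (fun x => (hasDerivAt_gaussianQ x).differentiableAt) fun x => ?_
  rw [(hasDerivAt_gaussianQ x).deriv, neg_nonpos]
  positivity

theorem convexOn_gaussianQ : ConvexOn ℝ (Set.Ici 0) gaussianQ := by
  have hdiff : Differentiable ℝ gaussianQ := fun x => (hasDerivAt_gaussianQ x).differentiableAt
  refine MonotoneOn.convexOn_of_deriv (convex_Ici 0) hdiff.continuous.continuousOn
    hdiff.differentiableOn fun x hx y _ hxy => ?_
  have hx : 0 ≤ x := interior_subset hx
  rw [(hasDerivAt_gaussianQ x).deriv, (hasDerivAt_gaussianQ y).deriv]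
  gcongr

/-- (Property 1) Let `T, W, V, γ, b` be positive real constants and define
`f_N(x) = √(T W x / V)·(ln(1+γ) − (b ln 2)/(T W x))` for `x > 0`.  On any convex
set `D ⊆ (0, ∞)` where `f_N ≥ 0`, the composition `x ↦ f_Q(f_N(x))` is convex. -/
theorem stmt2 (T W V γ b : ℝ) (hT : 0 < T) (hW : 0 < W) (hV : 0 < V)
    (hγ : 0 < γ) (hb : 0 < b) (D : Set ℝ) (hD : D ⊆ Set.Ioi (0 : ℝ))
    (hDconv : Convex ℝ D)
    (hnonneg : ∀ x ∈ D,
      0 ≤ Real.sqrt (T * W * x / V) *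
            (Real.log (1 + γ) - b * Real.log 2 / (T * W * x))) :
    ConvexOn ℝ D (fun x : ℝ =>
      gaussianQ (Real.sqrt (T * W * x / V) *
        (Real.log (1 + γ) - b * Real.log 2 / (T * W * x)))) := by
  have hlog : 0 ≤ Real.log (1 + γ) := Real.log_nonneg (by linarith)
  have hconcave : ConcaveOn ℝ D fun x => √(T * W * x / V) *
      (Real.log (1 + γ) - b * Real.log 2 / (T * W * x)) :=
    (concaveOn_sqrt_mul_div_mul_sub_div (by positivity) hV.le hlog (by positivity)).subset
      hD hDconv
  exact convexOn_comp_concaveOn_of_mapsTo (g := gaussianQ) convexOn_gaussianQ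
    (antitone_gaussianQ.antitoneOn _) hconcave hnonneg
end

section
/- For every real constant R ≥ 0, the function g(s) = (ln(1+s) − R) / √(1 − (1+s)^{−2}) is strictly increasing on (0, ∞). -/
/-!
Put `u = √(1 - (1 + s)⁻²)`, which increases with `s` and lies in `(0, 1)` for `s > 0`. Then
`2 ln (1 + s) = -ln (1 - u²)` is a strictly convex function `φ` of `u` with `φ 0 = 0`, and
`2 g(s) = (φ u - 2R) / u` is the slope of the line from `(0, 2R)` to `(u, φ u)`. As `(0, 2R)` lies
on or above the graph of `φ`, this slope is strictly increasing in `u`.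
-/

open Set

theorem strictMonoOn_sub_div_sub_of_strictConvexOn {𝕜 : Type*} [Field 𝕜] [LinearOrder 𝕜]
    [IsStrictOrderedRing 𝕜] {t : Set 𝕜} {f : 𝕜 → 𝕜} {a c : 𝕜} (hf : StrictConvexOn 𝕜 t f)
    (ha : a ∈ t) (hc : f a ≤ c) :
    StrictMonoOn (fun x ↦ (f x - c) / (x - a)) (t ∩ Ioi a) := by
  rintro x ⟨hxt, hax : a < x⟩ y ⟨hyt, hay : a < y⟩ hxy
  have slope_lt : (f x - f a) / (x - a) < (f y - f a) / (y - a) :=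
    hf.secant_strict_mono ha hxt hyt hax.ne' hay.ne' hxy
  have gap_le : (c - f a) / (y - a) ≤ (c - f a) / (x - a) :=
    div_le_div_of_nonneg_left (sub_nonneg.2 hc) (sub_pos.2 hax) (sub_le_sub_right hxy.le a)
  calc (f x - c) / (x - a) = (f x - f a) / (x - a) - (c - f a) / (x - a) := by ring
    _ < (f y - f a) / (y - a) - (c - f a) / (y - a) := by linarith
    _ = (f y - c) / (y - a) := by ring

theorem strictConcaveOn_log_one_sub_sq :
    StrictConcaveOn ℝ (Ioo (-1) 1) fun u : ℝ ↦ Real.log (1 - u ^ 2) := by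
  have image_subset : (fun u : ℝ ↦ 1 - u ^ 2) '' Ioo (-1) 1 ⊆ Ioi 0 :=
    image_subset_iff.2 fun u hu ↦ sub_pos.2 ((sq_lt_one_iff_abs_lt_one u).2 (abs_lt.2 hu))
  have convex_image : Convex ℝ ((fun u : ℝ ↦ 1 - u ^ 2) '' Ioo (-1) 1) :=
    (isPreconnected_Ioo.image _ (by fun_prop)).ordConnected.convex
  have sq_strictConvexOn : StrictConvexOn ℝ (Ioo (-1) 1) fun u : ℝ ↦ u ^ 2 :=
    (even_two.strictConvexOn_pow two_ne_zero).subset (subset_univ _) (convex_Ioo _ _)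
  exact (strictConcaveOn_log_Ioi.concaveOn.subset image_subset convex_image).comp_strictConcaveOn
    ((concaveOn_const 1 (convex_Ioo _ _)).sub_strictConvexOn sq_strictConvexOn)
    (Real.strictMonoOn_log.mono image_subset)

/-- The channel dispersion `V = 1 - (1 + s)⁻²` at signal-to-noise ratio `s`, whose square root is
the denominator of `g`. -/
noncomputable def channelDispersion (s : ℝ) : ℝ := 1 - ((1 + s) ^ 2)⁻¹

theorem channelDispersion_strictMonoOn : StrictMonoOn channelDispersion (Ioi (-1)) := by
  intro x (hx : -1 < x) y _ hxy
  have : 0 < 1 + x := by linarith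
  unfold channelDispersion
  gcongr

theorem channelDispersion_mem_Ioo {s : ℝ} (hs : 0 < s) : channelDispersion s ∈ Ioo 0 1 :=
  ⟨sub_pos.2 (inv_lt_one_of_one_lt₀ (one_lt_pow₀ (by linarith) two_ne_zero)),
    sub_lt_self 1 (by positivity)⟩

theorem sqrt_channelDispersion_mem_Ioo {s : ℝ} (hs : 0 < s) : √(channelDispersion s) ∈ Ioo 0 1 := by
  obtain ⟨hpos, hlt⟩ := channelDispersion_mem_Ioo hs
  exact ⟨Real.sqrt_pos.2 hpos, (Real.sqrt_lt' one_pos).2 (by rwa [one_pow])⟩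

theorem sqrt_channelDispersion_strictMonoOn :
    StrictMonoOn (fun s ↦ √(channelDispersion s)) (Ioi 0) :=
  Real.strictMonoOn_sqrt.comp
    (channelDispersion_strictMonoOn.mono (Ioi_subset_Ioi (by norm_num)))
    fun _ hs ↦ (channelDispersion_mem_Ioo hs).1.le

theorem log_one_sub_channelDispersion (s : ℝ) :
    Real.log (1 - channelDispersion s) = -(2 * Real.log (1 + s)) := by
  rw [channelDispersion, sub_sub_cancel, Real.log_inv, Real.log_pow, Nat.cast_ofNat]

/-- For every real constant `R ≥ 0`, the function
`g(s) = (ln(1+s) − R) / √(1 − (1+s)^{−2})` is strictly increasing on `(0, ∞)`. -/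
theorem stmt8 (R : ℝ) (hR : 0 ≤ R) :
    StrictMonoOn
      (fun s : ℝ => (Real.log (1 + s) - R) / Real.sqrt (1 - ((1 + s) ^ 2)⁻¹))
      (Set.Ioi (0 : ℝ)) := by
  have slope_strictMonoOn : StrictMonoOn (fun u : ℝ ↦ (-Real.log (1 - u ^ 2) - 2 * R) / (u - 0))
      (Ioo (-1) 1 ∩ Ioi 0) :=
    strictMonoOn_sub_div_sub_of_strictConvexOn strictConcaveOn_log_one_sub_sq.neg
      (by norm_num) (by simpa using hR)
  have mapsTo_sqrt : MapsTo (fun s ↦ √(channelDispersion s)) (Ioi 0) (Ioo (-1) 1 ∩ Ioi 0) :=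
    fun s hs ↦
      have ⟨hpos, hlt⟩ := sqrt_channelDispersion_mem_Ioo hs
      ⟨⟨neg_one_lt_zero.trans hpos, hlt⟩, hpos⟩
  have slope_eq : ∀ s ∈ Ioi (0 : ℝ), (-Real.log (1 - √(channelDispersion s) ^ 2) - 2 * R) /
      (√(channelDispersion s) - 0) = 2 * ((Real.log (1 + s) - R) / √(channelDispersion s)) := by
    intro s hs
    rw [Real.sq_sqrt (channelDispersion_mem_Ioo hs).1.le, log_one_sub_channelDispersion]
    ring
  have two_mul_strictMonoOn :=
    (slope_strictMonoOn.comp sqrt_channelDispersion_strictMonoOn mapsTo_sqrt).congr slope_eq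
  exact fun s hs t ht hst ↦
    lt_of_mul_lt_mul_left (two_mul_strictMonoOn hs ht hst) zero_le_two
end

section
/- Let T > 0, D > 0 and c > 0 be real constants. Then the function S ↦ (T/S)^{(S·D/c) − 1} is strictly decreasing on the set {S : S > T and S·D/c > 1}. -/
open Set

theorem strictAntiOn_const_div {G₀ : Type*} [GroupWithZero G₀] [PartialOrder G₀]
    [PosMulReflectLT G₀] [MulPosReflectLT G₀] {a : G₀} (ha : 0 < a) :
    StrictAntiOn (fun x => a / x) (Ioi 0) :=
  fun _ hx _ _ hxy => div_lt_div_of_pos_left ha hx hxy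

theorem strictAntiOn_rpow_of_strictAntiOn_of_monotoneOn {α : Type*} [Preorder α]
    {s : Set α} {f g : α → ℝ} (hf : StrictAntiOn f s) (hf_mem : MapsTo f s (Icc 0 1))
    (hg : MonotoneOn g s) (hg_pos : ∀ x ∈ s, 0 < g x) :
    StrictAntiOn (fun x => f x ^ g x) s := by
  intro x hx y hy hxy
  have base_lt : f y < f x := hf hx hy hxy
  have base_pos : 0 < f x := (hf_mem hy).1.trans_lt base_lt
  calc
    f y ^ g y < f x ^ g y := Real.rpow_lt_rpow (hf_mem hy).1 base_lt (hg_pos y hy)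
    _ ≤ f x ^ g x :=
      Real.rpow_le_rpow_of_exponent_ge base_pos (hf_mem hx).2 (hg hx hy hxy.le)

/-- For `T, D, c > 0`, the function `S ↦ (T/S)^{(S·D/c) − 1}` is strictly decreasing on
the set `{S : S > T and S·D/c > 1}`. -/
theorem stmt13 (T D c : ℝ) (hT : 0 < T) (hD : 0 < D) (hc : 0 < c) :
    StrictAntiOn (fun S : ℝ => (T / S) ^ (S * D / c - 1))
      {S : ℝ | T < S ∧ 1 < S * D / c} := by
  have exponent_mono : Monotone fun S : ℝ => S * D / c - 1 := fun _ _ hle =>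
    sub_le_sub_right (by gcongr) 1
  have base_anti : StrictAntiOn (fun S : ℝ => T / S) {S : ℝ | T < S ∧ 1 < S * D / c} :=
    (strictAntiOn_const_div hT).mono fun _ hS => hT.trans hS.1
  have base_mem : MapsTo (fun S : ℝ => T / S) {S : ℝ | T < S ∧ 1 < S * D / c} (Icc 0 1) := by
    rintro S ⟨hTS, -⟩
    have S_pos : 0 < S := hT.trans hTS
    exact ⟨(div_pos hT S_pos).le, (div_le_one S_pos).2 hTS.le⟩
  exact strictAntiOn_rpow_of_strictAntiOn_of_monotoneOn base_anti base_mem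
    (exponent_mono.monotoneOn _) fun _ hS => sub_pos.2 hS.2
end
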